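/- arXiv:1803.10846 — 2 statements merged into one kernel-verified Lean document; each statement's English description precedes it below -/
import Mathlib

section
/- Let A, Ã ∈ ℝ^{n×n} be symmetric matrices with nonnegative entries and zero diagonal (weighted adjacency matrices), let D, D̃ be the diagonal matrices with D_{i,i} = Σ_j A_{i,j} and D̃_{i,i} = Σ_j Ã_{i,j}, and let L = D − A and L̃ = D̃ − Ã be the corresponding graph Laplacians. Assume D_{i,i} > 0 for all i, 0 < ε < 1, and (1−ε)L ⪯ L̃ ⪯ L. Then: (1) (1−ε) D_{i,i} ≤ D̃_{i,i} ≤ D_{i,i} for every i; and (2) ‖D^{-1/2}(Ã − A)D^{-1/2}‖ ≤ 3ε, where ‖·‖ is the spectral norm. -/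
open scoped BigOperators
open Matrix

/-- Spectral (ℓ₂ operator) norm of a real matrix. -/
noncomputable def specNorm {n : ℕ} (A : Matrix (Fin n) (Fin n) ℝ) : ℝ :=
  ‖LinearMap.toContinuousLinearMap (Matrix.toEuclideanLin A)‖

/-- The degree matrix of a weighted adjacency matrix. -/
noncomputable def degMat {n : ℕ} (A : Matrix (Fin n) (Fin n) ℝ) : Matrix (Fin n) (Fin n) ℝ :=
  Matrix.diagonal fun i => ∑ j, A i j

/-- The graph Laplacian `L = D − A`. -/
noncomputable def lap {n : ℕ} (A : Matrix (Fin n) (Fin n) ℝ) : Matrix (Fin n) (Fin n) ℝ :=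
  degMat A - A

/-- The diagonal matrix `D^{-1/2}`. -/
noncomputable def invSqrtDeg {n : ℕ} (A : Matrix (Fin n) (Fin n) ℝ) :
    Matrix (Fin n) (Fin n) ℝ :=
  Matrix.diagonal fun i => (Real.sqrt (∑ j, A i j))⁻¹

/-!
By linearity `Ã - A = (D̃ - D) + (L - L̃)`. Since adjacency matrices have zero diagonal,
the diagonal entries of `(1 - ε)L ⪯ L̃ ⪯ L` compare the degrees: `(1 - ε)D ⪯ D̃ ⪯ D`.
Hence `Ã - A ⪰ D̃ - D ⪰ -εD`, while `Ã - A ⪯ L - L̃ ⪯ εL ⪯ 2εD`, the last step because the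
signless Laplacian `D + A` is positive semidefinite. Conjugating by `D^{-1/2}` bounds the
spectral norm by `2ε`.
-/

section LoewnerOrder

open scoped MatrixOrder

section OperatorNorm

variable {𝕜 : Type*} [RCLike 𝕜]

theorem opNorm_le_of_neg_smul_one_le_of_le_smul_one {E : Type*} [NormedAddCommGroup E]
    [InnerProductSpace 𝕜 E] {T : E →L[𝕜] E} {c : ℝ} (hc : 0 ≤ c)
    (hlow : -((c : 𝕜) • 1) ≤ T) (hup : T ≤ (c : 𝕜) • 1) : ‖T‖ ≤ c := by
  have hsymm : T.IsSymmetric := by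
    have hid : ((c : 𝕜) • (1 : E →ₗ[𝕜] E)).IsSymmetric :=
      LinearMap.IsSymmetric.one.smul (RCLike.conj_ofReal c)
    simpa using hid.sub hup.isSymmetric
  have hquad (x : E) : |T.reApplyInnerSelf x| ≤ c * ‖x‖ ^ 2 := by
    rw [ContinuousLinearMap.reApplyInnerSelf_apply, abs_le, neg_le_iff_add_nonneg]
    constructor
    · simpa [inner_add_left, inner_smul_left] using hlow.re_inner_nonneg_left x
    · simpa [inner_sub_left, inner_smul_left] using hup.re_inner_nonneg_left x
  rw [ContinuousLinearMap.norm_eq_iSup_rayleighQuotient T hsymm]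
  refine Real.iSup_le (fun x ↦ ?_) hc
  rw [ContinuousLinearMap.rayleighQuotient, abs_div, abs_sq]
  exact div_le_of_le_mul₀ (sq_nonneg _) hc (hquad x)

theorem toEuclideanCLM_le_toEuclideanCLM_iff {ι : Type*} [Fintype ι] [DecidableEq ι]
    {M N : Matrix ι ι 𝕜} :
    toEuclideanCLM (𝕜 := 𝕜) M ≤ toEuclideanCLM (𝕜 := 𝕜) N ↔ M ≤ N := by
  rw [← ContinuousLinearMap.coe_le_coe_iff, coe_toEuclideanCLM_eq_toEuclideanLin,
    coe_toEuclideanCLM_eq_toEuclideanLin, LinearMap.le_def, ← map_sub,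
    isPositive_toEuclideanLin_iff, le_iff]

end OperatorNorm

variable {n : ℕ} {A B : Matrix (Fin n) (Fin n) ℝ} {c ε : ℝ}

theorem specNorm_le_of_neg_smul_one_le_of_le_smul_one (hc : 0 ≤ c) (hlow : -(c • 1) ≤ A)
    (hup : A ≤ c • 1) : specNorm A ≤ c := by
  change ‖toEuclideanCLM (𝕜 := ℝ) A‖ ≤ c
  rw [← toEuclideanCLM_le_toEuclideanCLM_iff (𝕜 := ℝ)] at hlow hup
  exact opNorm_le_of_neg_smul_one_le_of_le_smul_one hc (by simpa using hlow) (by simpa using hup)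

theorem degMat_smul (c : ℝ) (A : Matrix (Fin n) (Fin n) ℝ) : degMat (c • A) = c • degMat A := by
  simp [degMat, ← Finset.mul_sum, ← diagonal_smul, Pi.smul_def]

theorem lap_smul (c : ℝ) (A : Matrix (Fin n) (Fin n) ℝ) : lap (c • A) = c • lap A := by
  rw [lap, degMat_smul, lap, smul_sub]

theorem degMat_le_degMat_iff : degMat A ≤ degMat B ↔ ∀ i, ∑ j, A i j ≤ ∑ j, B i j := by
  simp [degMat, le_iff, diagonal_sub]

theorem degMat_le_degMat_of_lap_le_lap (hA : ∀ i, A i i = 0) (hB : ∀ i, B i i = 0)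
    (h : lap A ≤ lap B) : degMat A ≤ degMat B := by
  refine degMat_le_degMat_iff.2 fun i ↦ ?_
  simpa [lap, degMat, hA, hB] using (le_iff.1 h).diag_nonneg (i := i)

theorem dotProduct_degMat_add_self_mulVec (hA : A.IsSymm) (x : Fin n → ℝ) :
    x ⬝ᵥ ((degMat A + A) *ᵥ x) = (∑ i, ∑ j, A i j * (x i + x j) ^ 2) / 2 := by
  have hswap : ∑ i, ∑ j, A i j * x j ^ 2 = ∑ i, ∑ j, A i j * x i ^ 2 := by
    rw [Finset.sum_comm]
    simp only [hA.apply]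
  have hdeg : x ⬝ᵥ (degMat A *ᵥ x) = ∑ i, ∑ j, A i j * x i ^ 2 := by
    simp only [dotProduct, degMat, mulVec_diagonal, ← Finset.sum_mul]
    exact Finset.sum_congr rfl fun i _ ↦ by ring
  have hadj : x ⬝ᵥ (A *ᵥ x) = ∑ i, ∑ j, A i j * (x i * x j) := by
    simp only [dotProduct, mulVec, Finset.mul_sum, mul_left_comm]
  have hexpand : ∑ i, ∑ j, A i j * (x i + x j) ^ 2 =
      ∑ i, ∑ j, A i j * x i ^ 2 + 2 * ∑ i, ∑ j, A i j * (x i * x j) +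
        ∑ i, ∑ j, A i j * x j ^ 2 := by
    simp only [Finset.mul_sum, ← Finset.sum_add_distrib]
    exact Finset.sum_congr rfl fun i _ ↦ Finset.sum_congr rfl fun j _ ↦ by ring
  rw [add_mulVec, dotProduct_add, hdeg, hadj, hexpand, hswap]
  ring

theorem posSemidef_degMat_add_self (hA : A.IsSymm) (hA0 : ∀ i j, 0 ≤ A i j) :
    (degMat A + A).PosSemidef := by
  refine .of_dotProduct_mulVec_nonneg ?_ fun x ↦ ?_
  · exact (isSymm_diagonal _).add hA
  · rw [star_trivial, dotProduct_degMat_add_self_mulVec hA]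
    have hsum : 0 ≤ ∑ i, ∑ j, A i j * (x i + x j) ^ 2 :=
      Finset.sum_nonneg fun i _ ↦ Finset.sum_nonneg fun j _ ↦ mul_nonneg (hA0 i j) (sq_nonneg _)
    positivity

theorem lap_le_two_smul_degMat (hA : A.IsSymm) (hA0 : ∀ i j, 0 ≤ A i j) :
    lap A ≤ (2 : ℝ) • degMat A := by
  have hsub : (2 : ℝ) • degMat A - lap A = degMat A + A := by rw [lap]; module
  rw [le_iff, hsub]
  exact posSemidef_degMat_add_self hA hA0

theorem sub_eq_degMat_sub_add_lap_sub (A B : Matrix (Fin n) (Fin n) ℝ) :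
    B - A = (degMat B - degMat A) + (lap A - lap B) := by
  simp only [lap]
  abel

theorem neg_smul_degMat_le_sub (hdeg : (1 - ε) • degMat A ≤ degMat B) (hup : lap B ≤ lap A) :
    -(ε • degMat A) ≤ B - A := calc
  -(ε • degMat A) = (1 - ε) • degMat A - degMat A := by module
  _ ≤ degMat B - degMat A := sub_le_sub_right hdeg _
  _ ≤ (degMat B - degMat A) + (lap A - lap B) := le_add_of_nonneg_right (sub_nonneg.2 hup)
  _ = B - A := (sub_eq_degMat_sub_add_lap_sub A B).symm

theorem sub_le_smul_lap (hdeg : degMat B ≤ degMat A) (hlow : (1 - ε) • lap A ≤ lap B) :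
    B - A ≤ ε • lap A := calc
  B - A = (degMat B - degMat A) + (lap A - lap B) := sub_eq_degMat_sub_add_lap_sub A B
  _ ≤ lap A - lap B := add_le_of_nonpos_left (sub_nonpos.2 hdeg)
  _ ≤ lap A - (1 - ε) • lap A := sub_le_sub_left hlow _
  _ = ε • lap A := by module

theorem invSqrtDeg_mul_degMat_mul_invSqrtDeg (hdeg : ∀ i, 0 < ∑ j, A i j) :
    invSqrtDeg A * degMat A * invSqrtDeg A = 1 := by
  rw [invSqrtDeg, degMat, diagonal_mul_diagonal, diagonal_mul_diagonal, diagonal_eq_one]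
  funext i
  have hsqrt : √(∑ j, A i j) ≠ 0 := (Real.sqrt_pos.2 (hdeg i)).ne'
  rw [Pi.one_apply]
  field_simp
  exact (Real.sq_sqrt (hdeg i).le).symm

theorem specNorm_invSqrtDeg_mul_mul_invSqrtDeg_le (hc : 0 ≤ c) (hdeg : ∀ i, 0 < ∑ j, A i j)
    (hlow : -(c • degMat A) ≤ B) (hup : B ≤ c • degMat A) :
    specNorm (invSqrtDeg A * B * invSqrtDeg A) ≤ c := by
  have hself : IsSelfAdjoint (invSqrtDeg A) := isHermitian_diagonal _
  have hone := invSqrtDeg_mul_degMat_mul_invSqrtDeg hdeg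
  apply specNorm_le_of_neg_smul_one_le_of_le_smul_one hc
  · simpa [hone] using hself.conjugate_le_conjugate hlow
  · simpa [hone] using hself.conjugate_le_conjugate hup

theorem stmt3_general {At : Matrix (Fin n) (Fin n) ℝ} (hε : 0 ≤ ε) (hAsym : A.IsSymm)
    (hA0 : ∀ i j, 0 ≤ A i j) (hAd : ∀ i, A i i = 0) (hAtd : ∀ i, At i i = 0)
    (hdeg : ∀ i, 0 < ∑ j, A i j) (hlow : (1 - ε) • lap A ≤ lap At) (hup : lap At ≤ lap A) :
    (∀ i, (1 - ε) * (∑ j, A i j) ≤ (∑ j, At i j) ∧ (∑ j, At i j) ≤ ∑ j, A i j) ∧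
      specNorm (invSqrtDeg A * (At - A) * invSqrtDeg A) ≤ 2 * ε := by
  have hdegLow : degMat ((1 - ε) • A) ≤ degMat At :=
    degMat_le_degMat_of_lap_le_lap (by simp [hAd]) hAtd (by rwa [lap_smul])
  have hdegUp : degMat At ≤ degMat A := degMat_le_degMat_of_lap_le_lap hAtd hAd hup
  refine ⟨fun i ↦ ⟨?_, degMat_le_degMat_iff.1 hdegUp i⟩, ?_⟩
  · simpa [Finset.mul_sum] using degMat_le_degMat_iff.1 hdegLow i
  rw [degMat_smul] at hdegLow
  have hD : 0 ≤ degMat A := (PosSemidef.diagonal fun i ↦ (hdeg i).le).nonneg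
  refine specNorm_invSqrtDeg_mul_mul_invSqrtDeg_le (by positivity) hdeg ?_ ?_
  · calc -((2 * ε) • degMat A) ≤ -(ε • degMat A) :=
          neg_le_neg (smul_le_smul_of_nonneg_right (by linarith) hD)
      _ ≤ At - A := neg_smul_degMat_le_sub hdegLow hup
  · calc At - A ≤ ε • lap A := sub_le_smul_lap hdegUp hlow
      _ ≤ ε • (2 : ℝ) • degMat A :=
          smul_le_smul_of_nonneg_left (lap_le_two_smul_degMat hAsym hA0) hε
      _ = (2 * ε) • degMat A := by module

end LoewnerOrder

/-- If `A, Ã` are weighted adjacency matrices with Laplacians `L, L̃`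
satisfying `(1−ε)L ⪯ L̃ ⪯ L`, then the degrees satisfy `(1−ε)Dᵢᵢ ≤ D̃ᵢᵢ ≤ Dᵢᵢ` and
`‖D^{-1/2}(Ã − A)D^{-1/2}‖ ≤ 3ε`. -/
theorem stmt3 {n : ℕ} (ε : ℝ) (hε0 : 0 < ε) (hε1 : ε < 1)
    (A At : Matrix (Fin n) (Fin n) ℝ)
    (hAsym : Aᵀ = A) (hAtsym : Atᵀ = At)
    (hA0 : ∀ i j, 0 ≤ A i j) (hAt0 : ∀ i j, 0 ≤ At i j)
    (hAd : ∀ i, A i i = 0) (hAtd : ∀ i, At i i = 0)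
    (hdeg : ∀ i, 0 < ∑ j, A i j)
    (hlow : (lap At - (1 - ε) • lap A).PosSemidef)
    (hup : (lap A - lap At).PosSemidef) :
    (∀ i, (1 - ε) * (∑ j, A i j) ≤ (∑ j, At i j) ∧ (∑ j, At i j) ≤ ∑ j, A i j) ∧
      specNorm (invSqrtDeg A * (At - A) * invSqrtDeg A) ≤ 3 * ε := by
  obtain ⟨hdegrees, hnorm⟩ := stmt3_general hε0.le hAsym hA0 hAd hAtd hdeg hlow hup
  exact ⟨hdegrees, hnorm.trans (by linarith)⟩
end

section
/- Let U, U* ∈ ℝ^{n×r}, and let R be an orthogonal r×r matrix minimizing ‖U − U*R‖_F over all orthogonal r×r matrices. Set Δ = U − U*R, M = UUᵀ, M* = U*(U*)ᵀ, and let σ*_r denote the r-th largest singular value of M*. Then ‖ΔΔᵀ‖_F² ≤ 2‖M − M*‖_F², and σ*_r ‖Δ‖_F² ≤ (1/(2(√2 − 1))) ‖M − M*‖_F². -/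
open scoped BigOperators
open Matrix

/-- Squared Frobenius norm of a real matrix. -/
noncomputable def frobSq {ι κ : Type*} [Fintype ι] [Fintype κ] (A : Matrix ι κ ℝ) : ℝ :=
  ∑ i, ∑ j, (A i j) ^ 2

/-- Frobenius norm of a real matrix. -/
noncomputable def frob {ι κ : Type*} [Fintype ι] [Fintype κ] (A : Matrix ι κ ℝ) : ℝ :=
  Real.sqrt (frobSq A)

/-- The minimum eigenvalue of a symmetric matrix, characterized as the largest `t`
with `tI ⪯ A`.  For `r ≤ n`, the `r`-th largest singular value of the PSD matrix
`U*(U*)ᵀ ∈ ℝ^{n×n}` equals the minimum eigenvalue of the Gram matrix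
`(U*)ᵀU* ∈ ℝ^{r×r}`. -/
noncomputable def minEig {r : ℕ} (A : Matrix (Fin r) (Fin r) ℝ) : ℝ :=
  sSup {t : ℝ | (A - t • (1 : Matrix (Fin r) (Fin r) ℝ)).PosSemidef}

/-!
Put `V = U* R`, `A = VᵀV`, `B = UᵀU`, `P = UᵀV` and `D = ΔᵀΔ`. Minimality of `R` says that
`Q ↦ tr(P Q)` is maximal over the orthogonal group at `Q = 1`. The first variation along
`exp (t K)` with `K` skew makes `P` symmetric, and comparing `1` with Householder reflections makes
`P` positive semidefinite. Symmetry of `P` gives `D = A + B - 2 P`, while always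
`‖M - M*‖² = ‖B‖² - 2‖P‖² + ‖A‖²`. Completing squares,
`2‖M - M*‖² = ‖D‖² + ‖B - A‖² + 4 tr(P D)` and
`‖M - M*‖² = 2(√2 - 1) tr(A D) + ‖√2 (P - A) + D‖² + (4 - 2√2) tr(P D)`,
where `tr(P D) ≥ 0`; finally `tr(A D) ≥ σ*_r tr D`.
-/

section FrobeniusNorm

variable {ι κ κ' : Type*} [Fintype ι] [Fintype κ] [Fintype κ']

lemma frobSq_nonneg (A : Matrix ι κ ℝ) : 0 ≤ frobSq A := by
  unfold frobSq
  positivity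

lemma frobSq_eq_trace_transpose_mul_self (A : Matrix ι κ ℝ) : frobSq A = trace (Aᵀ * A) := by
  simp only [frobSq, trace, diag_apply, mul_apply, transpose_apply, sq]
  exact Finset.sum_comm

lemma frobSq_eq_trace_mul_self {A : Matrix κ κ ℝ} (hA : A.IsSymm) : frobSq A = trace (A * A) := by
  rw [frobSq_eq_trace_transpose_mul_self, hA]

lemma frobSq_sub (A B : Matrix ι κ ℝ) :
    frobSq (A - B) = frobSq A - 2 * trace (Aᵀ * B) + frobSq B := by
  have trace_swap : trace (Bᵀ * A) = trace (Aᵀ * B) := by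
    rw [← trace_transpose, transpose_mul, transpose_transpose]
  simp only [frobSq_eq_trace_transpose_mul_self, transpose_sub, Matrix.sub_mul, Matrix.mul_sub,
    trace_sub, trace_swap]
  ring

lemma trace_mul_transpose_mul_mul_transpose (U : Matrix ι κ ℝ) (V : Matrix ι κ' ℝ) :
    trace (U * Uᵀ * (V * Vᵀ)) = frobSq (Uᵀ * V) := by
  rw [frobSq_eq_trace_transpose_mul_self, transpose_mul, transpose_transpose, ← Matrix.mul_assoc,
    trace_mul_comm]
  simp only [Matrix.mul_assoc]

lemma frobSq_mul_transpose_self (U : Matrix ι κ ℝ) : frobSq (U * Uᵀ) = frobSq (Uᵀ * U) := by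
  rw [frobSq_eq_trace_transpose_mul_self, transpose_mul, transpose_transpose,
    trace_mul_transpose_mul_mul_transpose]

lemma frobSq_mul_transpose_sub_mul_transpose (U : Matrix ι κ ℝ) (V : Matrix ι κ' ℝ) :
    frobSq (U * Uᵀ - V * Vᵀ) = frobSq (Uᵀ * U) - 2 * frobSq (Uᵀ * V) + frobSq (Vᵀ * V) := by
  rw [frobSq_sub, transpose_mul, transpose_transpose, trace_mul_transpose_mul_mul_transpose,
    frobSq_mul_transpose_self, frobSq_mul_transpose_self]

lemma frobSq_mul_of_mem_orthogonalGroup [DecidableEq κ] (A : Matrix ι κ ℝ) {Q : Matrix κ κ ℝ}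
    (hQ : Q ∈ orthogonalGroup κ ℝ) : frobSq (A * Q) = frobSq A := by
  have hQQ : Q * Qᵀ = 1 := (mem_orthogonalGroup_iff _ _).mp hQ
  rw [frobSq_eq_trace_transpose_mul_self, transpose_mul, Matrix.mul_assoc, trace_mul_comm,
    Matrix.mul_assoc, Matrix.mul_assoc, hQQ, Matrix.mul_one, frobSq_eq_trace_transpose_mul_self]

end FrobeniusNorm

section TraceMaximization

variable {ι κ : Type*} [Fintype ι] [Fintype κ] [DecidableEq κ]

/-- The Householder matrix `1 - 2 v vᵀ / (vᵀ v)` of the reflection in the hyperplane orthogonal to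
`v`. For `v = 0` the division by zero makes it the identity, which is still orthogonal. -/
noncomputable def householder (v : κ → ℝ) : Matrix κ κ ℝ :=
  1 - (2 / (v ⬝ᵥ v)) • vecMulVec v v

lemma householder_mem_orthogonalGroup (v : κ → ℝ) : householder v ∈ orthogonalGroup κ ℝ := by
  have symm : (householder v)ᵀ = householder v := by simp [householder, transpose_vecMulVec]
  rcases eq_or_ne (v ⬝ᵥ v) 0 with hv | hv
  · simp [householder, hv]
  rw [mem_orthogonalGroup_iff, symm]
  simp only [householder, Matrix.sub_mul, Matrix.mul_sub, Matrix.mul_one, Matrix.one_mul,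
    Matrix.smul_mul, Matrix.mul_smul, vecMulVec_mul_vecMulVec, vecMulVec_smul, smul_smul]
  match_scalars <;> field_simp
  ring

lemma trace_mul_householder (N : Matrix κ κ ℝ) (v : κ → ℝ) :
    trace (N * householder v) = trace N - 2 / (v ⬝ᵥ v) * (v ⬝ᵥ (N *ᵥ v)) := by
  simp [householder, Matrix.mul_sub, mul_vecMulVec, trace_vecMulVec, dotProduct_comm]

lemma dotProduct_mulVec_nonneg_of_forall_trace_mul_le {N : Matrix κ κ ℝ}
    (hN : ∀ Q ∈ orthogonalGroup κ ℝ, trace (N * Q) ≤ trace N) (v : κ → ℝ) :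
    0 ≤ v ⬝ᵥ (N *ᵥ v) := by
  rcases eq_or_ne v 0 with rfl | hv
  · simp
  have norm_pos : 0 < v ⬝ᵥ v := dotProduct_self_star_pos_iff.mpr hv
  have reflection_le := hN _ (householder_mem_orthogonalGroup v)
  rw [trace_mul_householder] at reflection_le
  exact nonneg_of_mul_nonneg_right (by linarith : 0 ≤ 2 / (v ⬝ᵥ v) * (v ⬝ᵥ (N *ᵥ v)))
    (by positivity)

lemma exp_mem_orthogonalGroup {K : Matrix κ κ ℝ} (hK : Kᵀ = -K) :
    NormedSpace.exp K ∈ orthogonalGroup κ ℝ := by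
  rw [mem_orthogonalGroup_iff, ← exp_transpose, hK,
    ← exp_add_of_commute _ _ (Commute.refl K).neg_right, add_neg_cancel, NormedSpace.exp_zero]

open scoped Matrix.Norms.Operator in
lemma trace_mul_eq_zero_of_forall_trace_mul_le {N K : Matrix κ κ ℝ}
    (hN : ∀ Q ∈ orthogonalGroup κ ℝ, trace (N * Q) ≤ trace N) (hK : Kᵀ = -K) :
    trace (N * K) = 0 := by
  let φ : Matrix κ κ ℝ →L[ℝ] ℝ :=
    LinearMap.toContinuousLinearMap (traceLinearMap κ ℝ ℝ ∘ₗ LinearMap.mulLeft ℝ N)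
  have deriv_exp : HasDerivAt (fun t : ℝ => φ (NormedSpace.exp (t • K))) (φ K) 0 := by
    have := φ.hasFDerivAt.comp_hasDerivAt (0 : ℝ) (hasDerivAt_exp_smul_const K (0 : ℝ))
    rwa [zero_smul, NormedSpace.exp_zero, one_mul] at this
  have isMax : IsLocalMax (fun t : ℝ => φ (NormedSpace.exp (t • K))) 0 := by
    refine Filter.Eventually.of_forall fun t => ?_
    have skew : (t • K)ᵀ = -(t • K) := by rw [transpose_smul, hK, smul_neg]
    simpa [φ] using hN _ (exp_mem_orthogonalGroup skew)
  exact isMax.hasDerivAt_eq_zero deriv_exp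

lemma isSymm_of_forall_trace_mul_le {N : Matrix κ κ ℝ}
    (hN : ∀ Q ∈ orthogonalGroup κ ℝ, trace (N * Q) ≤ trace N) : N.IsSymm := by
  have skew : (Nᵀ - N)ᵀ = -(Nᵀ - N) := by rw [transpose_sub, transpose_transpose, neg_sub]
  have stationary := trace_mul_eq_zero_of_forall_trace_mul_le hN skew
  have trace_eq_zero : trace ((Nᵀ - N)ᴴ * (Nᵀ - N)) = 0 := by
    have trace_transpose_sq : trace (Nᵀ * Nᵀ) = trace (N * N) := by
      rw [← transpose_mul, trace_transpose]
    simp only [conjTranspose_eq_transpose_of_trivial, transpose_sub, transpose_transpose,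
      Matrix.sub_mul, Matrix.mul_sub, trace_sub, trace_mul_comm Nᵀ N,
      trace_transpose_sq] at stationary ⊢
    linarith
  exact sub_eq_zero.mp (trace_conjTranspose_mul_self_eq_zero_iff.mp trace_eq_zero)

lemma posSemidef_of_forall_trace_mul_le {N : Matrix κ κ ℝ}
    (hN : ∀ Q ∈ orthogonalGroup κ ℝ, trace (N * Q) ≤ trace N) : N.PosSemidef :=
  .of_dotProduct_mulVec_nonneg (isSymm_of_forall_trace_mul_le hN)
    (dotProduct_mulVec_nonneg_of_forall_trace_mul_le hN)

lemma posSemidef_transpose_mul_of_forall_frob_le {U V : Matrix ι κ ℝ}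
    (hV : ∀ Q ∈ orthogonalGroup κ ℝ, frob (U - V) ≤ frob (U - V * Q)) :
    (Uᵀ * V).PosSemidef := by
  refine posSemidef_of_forall_trace_mul_le fun Q hQ => ?_
  have frobSq_le : frobSq (U - V) ≤ frobSq (U - V * Q) :=
    (Real.sqrt_le_sqrt_iff (frobSq_nonneg _)).mp (hV Q hQ)
  rw [frobSq_sub, frobSq_sub, frobSq_mul_of_mem_orthogonalGroup V hQ] at frobSq_le
  rw [Matrix.mul_assoc]
  linarith

end TraceMaximization

section AlignedFactors

variable {ι κ : Type*} [Fintype ι]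

lemma isSymm_gram (A : Matrix ι κ ℝ) : (Aᵀ * A).IsSymm := by
  rw [IsSymm, transpose_mul, transpose_transpose]

lemma transpose_sub_mul_sub_of_isSymm {U V : Matrix ι κ ℝ} (hP : (Uᵀ * V).IsSymm) :
    (U - V)ᵀ * (U - V) = Vᵀ * V + Uᵀ * U - (2 : ℝ) • (Uᵀ * V) := by
  have transpose_mul_swap : Vᵀ * U = Uᵀ * V := by
    rw [← hP, transpose_mul, transpose_transpose]
  simp only [transpose_sub, Matrix.sub_mul, Matrix.mul_sub, transpose_mul_swap]
  module

variable [Fintype κ]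

lemma trace_mul_gram_nonneg {P : Matrix κ κ ℝ} (hP : P.PosSemidef) (A : Matrix ι κ ℝ) :
    0 ≤ trace (P * (Aᵀ * A)) := by
  rw [← Matrix.mul_assoc, trace_mul_comm, ← Matrix.mul_assoc]
  exact (hP.mul_mul_conjTranspose_same A).trace_nonneg

lemma two_mul_frobSq_sub_add_eq {A B P D : Matrix κ κ ℝ} (hA : A.IsSymm) (hB : B.IsSymm)
    (hP : P.IsSymm) (hD : D = A + B - (2 : ℝ) • P) :
    2 * (frobSq B - 2 * frobSq P + frobSq A) =
      frobSq D + frobSq (B - A) + 4 * trace (P * D) := by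
  subst hD
  rw [frobSq_eq_trace_mul_self hA, frobSq_eq_trace_mul_self hB, frobSq_eq_trace_mul_self hP,
    frobSq_eq_trace_mul_self ((hA.add hB).sub (hP.smul 2)), frobSq_eq_trace_mul_self (hB.sub hA)]
  simp only [Matrix.add_mul, Matrix.mul_add, Matrix.sub_mul, Matrix.mul_sub, Matrix.smul_mul,
    Matrix.mul_smul, trace_add, trace_sub, trace_smul, smul_eq_mul, trace_mul_comm B A,
    trace_mul_comm P A, trace_mul_comm P B]
  ring

lemma frobSq_sub_add_eq {A B P D : Matrix κ κ ℝ} (hA : A.IsSymm) (hB : B.IsSymm)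
    (hP : P.IsSymm) (hD : D = A + B - (2 : ℝ) • P) :
    frobSq B - 2 * frobSq P + frobSq A =
      2 * (√2 - 1) * trace (A * D) + frobSq (√2 • (P - A) + D) +
        (4 - 2 * √2) * trace (P * D) := by
  subst hD
  rw [frobSq_eq_trace_mul_self hA, frobSq_eq_trace_mul_self hB, frobSq_eq_trace_mul_self hP,
    frobSq_eq_trace_mul_self (((hP.sub hA).smul _).add ((hA.add hB).sub (hP.smul 2)))]
  simp only [Matrix.add_mul, Matrix.mul_add, Matrix.sub_mul, Matrix.mul_sub, Matrix.smul_mul,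
    Matrix.mul_smul, trace_add, trace_sub, trace_smul, smul_eq_mul, trace_mul_comm B A,
    trace_mul_comm P A, trace_mul_comm P B]
  have sqrt_two_sq : √2 ^ 2 = (2 : ℝ) := Real.sq_sqrt zero_le_two
  ring_nf
  rw [sqrt_two_sq]
  ring

lemma frobSq_sub_mul_transpose_sub_le {U V : Matrix ι κ ℝ} (hP : (Uᵀ * V).PosSemidef) :
    frobSq ((U - V) * (U - V)ᵀ) ≤ 2 * frobSq (U * Uᵀ - V * Vᵀ) := by
  have hsymm : (Uᵀ * V).IsSymm := hP.isHermitian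
  rw [frobSq_mul_transpose_self, frobSq_mul_transpose_sub_mul_transpose,
    two_mul_frobSq_sub_add_eq (isSymm_gram V) (isSymm_gram U) hsymm
      (transpose_sub_mul_sub_of_isSymm hsymm)]
  have := frobSq_nonneg (Uᵀ * U - Vᵀ * V)
  have := trace_mul_gram_nonneg hP (U - V)
  linarith

lemma trace_gram_mul_gram_sub_le {U V : Matrix ι κ ℝ} (hP : (Uᵀ * V).PosSemidef) :
    2 * (√2 - 1) * trace (Vᵀ * V * ((U - V)ᵀ * (U - V))) ≤ frobSq (U * Uᵀ - V * Vᵀ) := by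
  have hsymm : (Uᵀ * V).IsSymm := hP.isHermitian
  rw [frobSq_mul_transpose_sub_mul_transpose,
    frobSq_sub_add_eq (isSymm_gram V) (isSymm_gram U) hsymm
      (transpose_sub_mul_sub_of_isSymm hsymm)]
  have coeff_nonneg : 0 ≤ 4 - 2 * √2 := by
    linarith [(Real.sqrt_le_left zero_le_two).mpr (by norm_num : (2 : ℝ) ≤ 2 ^ 2)]
  have := frobSq_nonneg (√2 • (Uᵀ * V - Vᵀ * V) + (U - V)ᵀ * (U - V))
  have := mul_nonneg coeff_nonneg
    (trace_mul_gram_nonneg hP (U - V))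
  linarith

end AlignedFactors

section MinEig

variable {ι : Type*} [Fintype ι] {r : ℕ}

lemma minEig_mul_frobSq_le {P : Matrix (Fin r) (Fin r) ℝ} (hP : P.PosSemidef)
    (A : Matrix ι (Fin r) ℝ) : minEig P * frobSq A ≤ trace (P * (Aᵀ * A)) := by
  have trace_nonneg := trace_mul_gram_nonneg hP A
  rcases (frobSq_nonneg A).eq_or_lt with frobSq_eq_zero | frobSq_pos
  · rwa [← frobSq_eq_zero, mul_zero]
  rw [← le_div_iff₀ frobSq_pos]
  refine Real.sSup_le (fun t ht => ?_) (by positivity)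
  have shifted_nonneg := trace_mul_gram_nonneg ht A
  rw [Matrix.sub_mul, trace_sub, Matrix.smul_mul, Matrix.one_mul, trace_smul, smul_eq_mul,
    ← frobSq_eq_trace_transpose_mul_self] at shifted_nonneg
  rw [le_div_iff₀ frobSq_pos]
  linarith

lemma minEig_transpose_mul_mul {Q : Matrix (Fin r) (Fin r) ℝ} (hQ : Q ∈ orthogonalGroup (Fin r) ℝ)
    (A : Matrix (Fin r) (Fin r) ℝ) : minEig (Qᵀ * A * Q) = minEig A := by
  have hQQ : Qᵀ * Q = 1 := (mem_orthogonalGroup_iff' _ _).mp hQ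
  have conj_shift (t : ℝ) : Qᵀ * A * Q - t • 1 = star Q * (A - t • 1) * Q := by
    simp [star_eq_conjTranspose, Matrix.mul_sub, Matrix.sub_mul, hQQ]
  have hunit : IsUnit Q := .of_mul_eq_one_right _ hQQ
  simp only [minEig, conj_shift, hunit.posSemidef_star_left_conjugate_iff]

end MinEig

theorem stmt13_general {ι : Type*} [Fintype ι] {r : ℕ}
    (U Ustar : Matrix ι (Fin r) ℝ)
    (R : Matrix (Fin r) (Fin r) ℝ) (hR : Rᵀ * R = 1)
    (hRmin : ∀ R' : Matrix (Fin r) (Fin r) ℝ, R'ᵀ * R' = 1 →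
      frob (U - Ustar * R) ≤ frob (U - Ustar * R'))
    (Δ : Matrix ι (Fin r) ℝ) (hΔ : Δ = U - Ustar * R) :
    frobSq (Δ * Δᵀ) ≤ 2 * frobSq (U * Uᵀ - Ustar * Ustarᵀ) ∧
      minEig (Ustarᵀ * Ustar) * frobSq Δ ≤
        (1 / (2 * (√2 - 1))) * frobSq (U * Uᵀ - Ustar * Ustarᵀ) := by
  subst hΔ
  have hRO : R ∈ orthogonalGroup (Fin r) ℝ := (mem_orthogonalGroup_iff' _ _).mpr hR
  have hRR : R * Rᵀ = 1 := (mem_orthogonalGroup_iff _ _).mp hRO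
  set V := Ustar * R with hV
  have gram_eq : Ustar * Ustarᵀ = V * Vᵀ := by
    rw [hV, transpose_mul, Matrix.mul_assoc, ← Matrix.mul_assoc R, hRR, Matrix.one_mul]
  have minEig_eq : minEig (Ustarᵀ * Ustar) = minEig (Vᵀ * V) := by
    rw [← minEig_transpose_mul_mul hRO, hV, transpose_mul]
    simp only [Matrix.mul_assoc]
  have aligned : (Uᵀ * V).PosSemidef := posSemidef_transpose_mul_of_forall_frob_le fun Q hQ => by
    rw [hV, Matrix.mul_assoc]
    exact hRmin _ ((mem_orthogonalGroup_iff' _ _).mp (mul_mem hRO hQ))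
  rw [gram_eq, minEig_eq]
  refine ⟨frobSq_sub_mul_transpose_sub_le aligned, ?_⟩
  have sqrt_two_gt_one : 1 < √2 := Real.one_lt_sqrt_two
  rw [one_div_mul_eq_div, le_div_iff₀' (by linarith)]
  calc 2 * (√2 - 1) * (minEig (Vᵀ * V) * frobSq (U - V))
      ≤ 2 * (√2 - 1) * trace (Vᵀ * V * ((U - V)ᵀ * (U - V))) :=
        mul_le_mul_of_nonneg_left
          (minEig_mul_frobSq_le (posSemidef_conjTranspose_mul_self V) _) (by linarith)
    _ ≤ frobSq (U * Uᵀ - V * Vᵀ) := trace_gram_mul_gram_sub_le aligned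

/-- If `R` is an orthogonal matrix minimizing `‖U − U*R‖_F` and
`Δ = U − U*R`, then `‖ΔΔᵀ‖_F² ≤ 2‖UUᵀ − U*(U*)ᵀ‖_F²` and
`σ*_r ‖Δ‖_F² ≤ ‖UUᵀ − U*(U*)ᵀ‖_F² / (2(√2 − 1))`, where `σ*_r` is the `r`-th largest
singular value of `M* = U*(U*)ᵀ`. -/
theorem stmt13 {n r : ℕ} (hrn : r ≤ n)
    (U Ustar : Matrix (Fin n) (Fin r) ℝ)
    (R : Matrix (Fin r) (Fin r) ℝ) (hR : Rᵀ * R = 1)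
    (hRmin : ∀ R' : Matrix (Fin r) (Fin r) ℝ, R'ᵀ * R' = 1 →
      frob (U - Ustar * R) ≤ frob (U - Ustar * R')) :
    ∀ (Δ : Matrix (Fin n) (Fin r) ℝ), Δ = U - Ustar * R →
      frobSq (Δ * Δᵀ) ≤ 2 * frobSq (U * Uᵀ - Ustar * Ustarᵀ) ∧
      minEig (Ustarᵀ * Ustar) * frobSq Δ ≤
        (1 / (2 * (Real.sqrt 2 - 1))) * frobSq (U * Uᵀ - Ustar * Ustarᵀ) := by
  exact stmt13_general U Ustar R hR hRmin
end
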